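/- Assume 𝒜, ℬ as in the context with Λ_𝒜 spanning. Let z ∈ 𝕍, t > 0, and suppose (ν⁰, t ν^∞) ∈ Y(z), where ν⁰ is a Borel probability measure on 𝕍 with finite first moment and ν^∞ a Borel probability measure on 𝕊_𝕍. Then for every 𝒜-quasiconvex F ∈ ℍ, writing D = { F'(z₀) : z₀ a point of differentiability of F } ⊂ 𝕍 and G(w) = sup_{ζ ∈ D} ζ·w for its support function, one has G(ν̄^∞) ≤ ∫_{𝕊_𝕍} F^∞ dν^∞, where ν̄^∞ is the first moment of ν^∞. Moreover D is bounded, with sup_{ζ∈D} |ζ| equal to the least Lipschitz constant of F. -/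

import Mathlib

open MeasureTheory Filter Topology

noncomputable section

/-! ## Basic PDE setup -/

abbrev Dom (n : ℕ) := Fin n → ℝ

def unitCube (n : ℕ) : Set (Dom n) := Set.univ.pi fun _ => Set.Ioo (-(1/2) : ℝ) (1/2)

def closedUnitCube (n : ℕ) : Set (Dom n) := Set.univ.pi fun _ => Set.Icc (-(1/2) : ℝ) (1/2)

/-- The finite set of multi-indices of degree `k`. -/
def degSet (n k : ℕ) : Finset (Fin n → ℕ) :=
  (Fintype.piFinset fun _ : Fin n => Finset.range (k+1)).filter fun α => (∑ i, α i) = k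

/-- Partial derivative in the `j`-th coordinate direction. -/
def pderivDir {n : ℕ} {V : Type*} [NormedAddCommGroup V] [NormedSpace ℝ V]
    (j : Fin n) (u : Dom n → V) : Dom n → V :=
  fun x => fderiv ℝ u x (Pi.single j 1)

/-- The multi-index partial derivative `∂^α`. -/
def mderiv {n : ℕ} {V : Type*} [NormedAddCommGroup V] [NormedSpace ℝ V]
    (α : Fin n → ℕ) (u : Dom n → V) : Dom n → V :=
  (List.finRange n).foldr (fun j f => (pderivDir j)^[α j] f) u

/-- The action of a homogeneous `k`-th order constant-coefficient operator with
coefficients `A α` on a function. -/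
def opApply {n : ℕ} {V W : Type*} [NormedAddCommGroup V] [NormedSpace ℝ V]
    [NormedAddCommGroup W] [NormedSpace ℝ W]
    (A : (Fin n → ℕ) → (V →L[ℝ] W)) (k : ℕ) (u : Dom n → V) (x : Dom n) : W :=
  ∑ α ∈ degSet n k, A α (mderiv α u x)

/-- The symbol `𝒜(ξ) = Σ_{|α|=k} ξ^α A_α`. -/
def opSymbol {n : ℕ} {V W : Type*} [NormedAddCommGroup V] [NormedSpace ℝ V]
    [NormedAddCommGroup W] [NormedSpace ℝ W]
    (A : (Fin n → ℕ) → (V →L[ℝ] W)) (k : ℕ) (ξ : Dom n) : V →L[ℝ] W :=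
  ∑ α ∈ degSet n k, (∏ i, ξ i ^ α i) • A α

/-- The wave cone `Λ_𝒜 = ⋃_{ξ ≠ 0} ker 𝒜(ξ)`. -/
def waveCone {n : ℕ} {V W : Type*} [NormedAddCommGroup V] [NormedSpace ℝ V]
    [NormedAddCommGroup W] [NormedSpace ℝ W]
    (A : (Fin n → ℕ) → (V →L[ℝ] W)) (k : ℕ) : Set V :=
  {v | ∃ ξ : Dom n, ξ ≠ 0 ∧ opSymbol A k ξ v = 0}

/-- The wave cone is spanning. -/
def SpanningCone {n : ℕ} {V W : Type*} [NormedAddCommGroup V] [NormedSpace ℝ V]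
    [NormedAddCommGroup W] [NormedSpace ℝ W]
    (A : (Fin n → ℕ) → (V →L[ℝ] W)) (k : ℕ) : Prop :=
  Submodule.span ℝ (waveCone A k) = ⊤

/-- `ℬ` is an exact potential of `𝒜`:  `ker 𝒜(ξ) = im ℬ(ξ)` for all `ξ ≠ 0`. -/
def ExactPotential {n : ℕ} {U V W : Type*} [NormedAddCommGroup V] [NormedSpace ℝ V]
    [NormedAddCommGroup W] [NormedSpace ℝ W] [NormedAddCommGroup U] [NormedSpace ℝ U]
    (A : (Fin n → ℕ) → (V →L[ℝ] W)) (k : ℕ)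
    (B : (Fin n → ℕ) → (U →L[ℝ] V)) (l : ℕ) : Prop :=
  ∀ ξ : Dom n, ξ ≠ 0 → LinearMap.ker (opSymbol A k ξ : V →ₗ[ℝ] W) = LinearMap.range (opSymbol B l ξ : U →ₗ[ℝ] V)

/-- `ℤⁿ`-periodicity. -/
def ZPeriodic {n : ℕ} {V : Type*} (v : Dom n → V) : Prop :=
  ∀ (x : Dom n) (m : Fin n → ℤ), v (x + fun i => (m i : ℝ)) = v x

/-- `𝒜`-quasiconvexity of a continuous integrand. -/
def AQuasiconvex {n : ℕ} {V W : Type*} [NormedAddCommGroup V] [NormedSpace ℝ V]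
    [NormedAddCommGroup W] [NormedSpace ℝ W]
    (A : (Fin n → ℕ) → (V →L[ℝ] W)) (k : ℕ) (f : V → ℝ) : Prop :=
  Continuous f ∧ ∀ (z : V) (v : Dom n → V), ContDiff ℝ (⊤ : ℕ∞) v → ZPeriodic v →
    (∫ x in unitCube n, v x) = 0 → (∀ x, opApply A k v x = 0) →
    f z ≤ ∫ x in unitCube n, f (z + v x)

def LinearGrowth {V : Type*} [NormedAddCommGroup V] (f : V → ℝ) : Prop :=
  ∃ c : ℝ, ∀ z, |f z| ≤ c * (1 + ‖z‖)

/-- Upper recession function `f^∞(z) = limsup_{t→∞, z'→z} f(tz')/t`. -/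
def urec {V : Type*} [NormedAddCommGroup V] [NormedSpace ℝ V] (f : V → ℝ) (z : V) : ℝ :=
  limsup (fun p : ℝ × V => f (p.1 • p.2) / p.1) (atTop ×ˢ 𝓝 z)

/-- The radial recession function `z ↦ limsup_{t→∞} f(tz)/t`. -/
def rrec {V : Type*} [NormedAddCommGroup V] [NormedSpace ℝ V] (f : V → ℝ) (z : V) : ℝ :=
  limsup (fun t : ℝ => f (t • z) / t) atTop

/-- `g` is the recession function of `Φ`, the limit being locally uniform. -/
def HasRec {V : Type*} [NormedAddCommGroup V] [NormedSpace ℝ V] (Φ g : V → ℝ) : Prop :=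
  TendstoLocallyUniformly (fun (t : ℝ) (z : V) => Φ (t • z) / t) g atTop

/-- Membership in the class `ℍ`. -/
def MemH {V : Type*} [NormedAddCommGroup V] [NormedSpace ℝ V] (Φ : V → ℝ) : Prop :=
  Continuous Φ ∧ LinearGrowth Φ ∧ ∃ g : V → ℝ, HasRec Φ g

/-- `C_c^∞` functions with support in `Ω`. -/
def CcSmooth {n : ℕ} {U : Type*} [NormedAddCommGroup U] [NormedSpace ℝ U]
    (Ω : Set (Dom n)) (u : Dom n → U) : Prop :=
  ContDiff ℝ (⊤ : ℕ∞) u ∧ HasCompactSupport u ∧ tsupport u ⊆ Ω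

/-- The `W^{l-1,1}` norm : sum of the `L¹` norms of derivatives of order `< l`. -/
def sobNorm {n : ℕ} {U : Type*} [NormedAddCommGroup U] [NormedSpace ℝ U]
    (l : ℕ) (u : Dom n → U) : ℝ :=
  ∑ j ∈ Finset.range l, ∫ x : Dom n, ‖iteratedFDeriv ℝ j u x‖

/-- Membership of a pair `(ν⁰, ν^∞)` in the set `Y(z)` of Young measures generated by
sequences `z + ℬ u_j` with `u_j ∈ C_c^∞(𝕏, 𝕌)` and `‖u_j‖_{W^{l-1,1}} → 0`. -/
def memY {n : ℕ} {U V : Type*} [NormedAddCommGroup V] [InnerProductSpace ℝ V]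
    [FiniteDimensional ℝ V] [MeasurableSpace V] [BorelSpace V]
    [NormedAddCommGroup U] [NormedSpace ℝ U]
    (B : (Fin n → ℕ) → (U →L[ℝ] V)) (l : ℕ) (z : V)
    (nu0 : Measure V) (nuInf : Measure (Metric.sphere (0:V) 1)) : Prop :=
  ∃ u : ℕ → Dom n → U,
    (∀ j, CcSmooth (unitCube n) (u j)) ∧
    Tendsto (fun j => sobNorm l (u j)) atTop (𝓝 0) ∧
    ∀ Φ : V → ℝ, MemH Φ →
      Tendsto (fun j => ∫ x in unitCube n, Φ (z + opApply B l (u j) x)) atTop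
        (𝓝 ((∫ v, Φ v ∂nu0) + ∫ w, rrec Φ (w : V) ∂nuInf))

/-! ## The transform T, Lipschitz test classes, derivative sets, envelopes -/

/-- The transformed integrand on the open unit ball. -/
def transf {V : Type*} [NormedAddCommGroup V] [NormedSpace ℝ V] (Φ : V → ℝ) (zh : V) : ℝ :=
  (1 - ‖zh‖) * Φ ((1 - ‖zh‖)⁻¹ • zh)

/-- The function `TΦ` on the closed unit ball (as a function on `V`). -/
def Tfun {V : Type*} [NormedAddCommGroup V] [NormedSpace ℝ V] (Φ : V → ℝ) (zh : V) : ℝ :=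
  if ‖zh‖ < 1 then transf Φ zh else rrec Φ zh

/-- `‖TΦ‖_LIP ≤ 1` on the closed unit ball. -/
def TLipUnit {V : Type*} [NormedAddCommGroup V] [NormedSpace ℝ V] (Φ : V → ℝ) : Prop :=
  ∃ K : NNReal, LipschitzOnWith K (Tfun Φ) (Metric.closedBall (0:V) 1) ∧
    (⨆ zh ∈ Metric.closedBall (0:V) 1, |Tfun Φ zh|) + (K : ℝ) ≤ 1

/-- `‖η‖_LIP ≤ 1` on `Ω̄` (with the `ℓ^∞` metric on `ℝⁿ`). -/
def etaLipUnit {n : ℕ} (Ω : Set (Dom n)) (η : Dom n → ℝ) : Prop :=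
  ∃ K : NNReal, LipschitzOnWith K η (closure Ω) ∧
    (⨆ x ∈ closure Ω, |η x|) + (K : ℝ) ≤ 1

/-- The set of derivatives `F'(z₀)` of `F` (realized as vectors via the inner product). -/
def derivSet {V : Type*} [NormedAddCommGroup V] [InnerProductSpace ℝ V]
    [FiniteDimensional ℝ V] (F : V → ℝ) : Set V :=
  {ζ : V | ∃ z₀ : V, HasFDerivAt F (InnerProductSpace.toDual ℝ V ζ : V →L[ℝ] ℝ) z₀}

/-- The support function of a set `D ⊂ 𝕍`. -/
def suppFn {V : Type*} [NormedAddCommGroup V] [InnerProductSpace ℝ V]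
    (D : Set V) (w : V) : ℝ :=
  sSup ((fun ζ => (inner ℝ ζ w : ℝ)) '' D)

/-- The `𝒜`-quasiconvex envelope, with values in `[-∞, ∞)` (realized in `EReal`). -/
def qcEnv {n : ℕ} {V W : Type*} [NormedAddCommGroup V] [InnerProductSpace ℝ V]
    [FiniteDimensional ℝ V] [NormedAddCommGroup W] [NormedSpace ℝ W]
    (A : (Fin n → ℕ) → (V →L[ℝ] W)) (k : ℕ) (Φ : V → ℝ) (ξ : V) : EReal :=
  sInf {r : EReal | ∃ v : Dom n → V, ContDiff ℝ (⊤ : ℕ∞) v ∧ ZPeriodic v ∧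
    (∫ x in unitCube n, v x) = 0 ∧ (∀ x, opApply A k v x = 0) ∧
    r = ((∫ x in unitCube n, Φ (ξ + v x) : ℝ) : EReal)}

/-- A standard mollifier: smooth, nonnegative, supported in the closed unit cube,
positive on the open unit cube, with integral one. -/
def IsStdMollifier (n : ℕ) (ρ : Dom n → ℝ) : Prop :=
  ContDiff ℝ (⊤ : ℕ∞) ρ ∧ (∀ x, 0 ≤ ρ x) ∧ tsupport ρ ⊆ closedUnitCube n ∧
    (∀ x ∈ unitCube n, 0 < ρ x) ∧ (∫ x : Dom n, ρ x) = 1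

/-- A mollifier (no interior positivity required). -/
def IsMollifier (n : ℕ) (ρ : Dom n → ℝ) : Prop :=
  ContDiff ℝ (⊤ : ℕ∞) ρ ∧ (∀ x, 0 ≤ ρ x) ∧ tsupport ρ ⊆ closedUnitCube n ∧
    (∫ x : Dom n, ρ x) = 1

/-- The rescaled mollifier kernel `φ_t(x) = t^{-n} φ(x/t)`. -/
def mollK {n : ℕ} (ρ : Dom n → ℝ) (t : ℝ) (x : Dom n) : ℝ := ((t : ℝ) ^ n)⁻¹ * ρ (t⁻¹ • x)

/-!
Let `z₀` be a point of differentiability of `F`, with gradient `ζ`. The difference quotients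
`Q_s(w) = s⁻¹ (F(z₀ + s w) - F(z₀))`, `s > 0`, are `𝒜`-quasiconvex and have the same recession
function as `F`. Since `ℬ u` extends periodically to an `𝒜`-free field of mean zero when
`u ∈ C_c^∞(𝕏, 𝕌)`, every pair in `Y(z)` satisfies Jensen's inequality for `𝒜`-quasiconvex functions
in `ℍ`. Applied to `Q_s` it gives, as `s → 0`, `ζ·z ≤ ∫ ζ·v dν⁰ + t ∫ F^∞ dν^∞`, and applied to the
linear function `-ζ` it gives `ζ·z ≥ ∫ ζ·v dν⁰ + t ζ·ν̄^∞`. Subtract.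

The passage to the limit needs `F` to be Lipschitz. Testing quasiconvexity with plane waves shows
that `F` is convex along `ℬ(ξ)u` for rational, hence for all `ξ`; a convex function of linear growth
on a line is Lipschitz, and the wave cone spans `𝕍`. The Lipschitz constant is the supremum of the
gradients by Rademacher's theorem and integration along almost every line.
-/

/-! ### Smooth maps and multi-index derivatives -/

section PartialDerivatives

variable {n : ℕ} {V W : Type*} [NormedAddCommGroup V] [NormedSpace ℝ V]
  [NormedAddCommGroup W] [NormedSpace ℝ W]

theorem contDiff_pderivDir {u : Dom n → V} (hu : ContDiff ℝ (⊤ : ℕ∞) u) (j : Fin n) :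
    ContDiff ℝ (⊤ : ℕ∞) (pderivDir j u) :=
  (hu.fderiv_right (m := (⊤ : ℕ∞)) (by simp)).clm_apply contDiff_const

theorem pderivDir_pderivDir {u : Dom n → V} (hu : ContDiff ℝ (⊤ : ℕ∞) u) (i j : Fin n)
    (x : Dom n) : pderivDir i (pderivDir j u) x =
      fderiv ℝ (fderiv ℝ u) x (Pi.single i 1) (Pi.single j 1) := by
  have hu' : Differentiable ℝ (fderiv ℝ u) :=
    (hu.fderiv_right (m := (⊤ : ℕ∞)) (by simp)).differentiable (by simp)
  unfold pderivDir
  rw [fderiv_clm_apply (hu' x) (differentiableAt_const _)]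
  simp

/-- The space `C^∞(ℝⁿ, V)`, on which the partial derivatives are commuting endomorphisms. -/
def smoothMaps (n : ℕ) (V : Type*) [NormedAddCommGroup V] [NormedSpace ℝ V] :
    Submodule ℝ (Dom n → V) where
  carrier := {u | ContDiff ℝ (⊤ : ℕ∞) u}
  add_mem' {u v} (hu : ContDiff ℝ (⊤ : ℕ∞) u) (hv : ContDiff ℝ (⊤ : ℕ∞) v) := hu.add hv
  zero_mem' := show ContDiff ℝ (⊤ : ℕ∞) fun _ => (0 : V) from contDiff_const
  smul_mem' c u (hu : ContDiff ℝ (⊤ : ℕ∞) u) := hu.const_smul c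

theorem mem_smoothMaps {u : Dom n → V} : u ∈ smoothMaps n V ↔ ContDiff ℝ (⊤ : ℕ∞) u := Iff.rfl

theorem smoothMaps_contDiff (u : smoothMaps n V) : ContDiff ℝ (⊤ : ℕ∞) (u : Dom n → V) :=
  mem_smoothMaps.1 u.2

theorem smoothMaps_differentiable (u : smoothMaps n V) : Differentiable ℝ (u : Dom n → V) :=
  (smoothMaps_contDiff u).differentiable (by simp)

/-- `∂_j` as an endomorphism of the space of smooth maps. -/
def partialDeriv (j : Fin n) : Module.End ℝ (smoothMaps n V) where
  toFun u := ⟨pderivDir j u, contDiff_pderivDir (smoothMaps_contDiff u) j⟩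
  map_add' u v := by
    ext x
    exact DFunLike.congr_fun
      (fderiv_add (smoothMaps_differentiable u x) (smoothMaps_differentiable v x)) (Pi.single j 1)
  map_smul' c u := by
    ext x
    exact congr($(fderiv_const_smul (smoothMaps_differentiable u x) c) (Pi.single j 1))

theorem partialDeriv_commute (i j : Fin n) :
    Commute (partialDeriv i : Module.End ℝ (smoothMaps n V)) (partialDeriv j) := by
  refine LinearMap.ext fun u => Subtype.ext (funext fun x => ?_)
  have hsymm : IsSymmSndFDerivAt ℝ (u : Dom n → V) x :=
    ContDiffAt.isSymmSndFDerivAt (n := (⊤ : ℕ∞)) (smoothMaps_contDiff u).contDiffAt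
      (by simpa using WithTop.coe_le_coe.2 (le_top (a := (2 : ℕ∞))))
  exact (pderivDir_pderivDir (smoothMaps_contDiff u) i j x).trans
    ((hsymm _ _).trans (pderivDir_pderivDir (smoothMaps_contDiff u) j i x).symm)

/-- `∂^α` as an endomorphism of the space of smooth maps. -/
def mderivEnd (α : Fin n → ℕ) : Module.End ℝ (smoothMaps n V) :=
  ((List.finRange n).map fun j => partialDeriv j ^ α j).prod

theorem mderivEnd_apply (α : Fin n → ℕ) (u : smoothMaps n V) :
    mderivEnd α u = (List.finRange n).foldr (fun j => (partialDeriv j)^[α j]) u := by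
  unfold mderivEnd
  induction List.finRange n with
  | nil => rfl
  | cons j L ih =>
    rw [List.map_cons, List.prod_cons, Module.End.mul_apply, ih, Module.End.pow_apply,
      List.foldr_cons]

theorem mderiv_semiconj {X : Type*} {Φ : X → Dom n → V} {D : Fin n → X → X}
    (h : ∀ j, Function.Semiconj Φ (D j) (pderivDir j)) (α : Fin n → ℕ) (x : X) :
    mderiv α (Φ x) = Φ ((List.finRange n).foldr (fun j => (D j)^[α j]) x) :=
  List.foldr_hom Φ fun j y => (((h j).iterate_right (α j)).eq y).symm

theorem coe_mderivEnd (α : Fin n → ℕ) (u : smoothMaps n V) :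
    (mderivEnd α u : Dom n → V) = mderiv α u := by
  rw [mderivEnd_apply, mderiv_semiconj (Φ := ((↑) : smoothMaps n V → Dom n → V))
    (D := fun j => partialDeriv j) fun _ _ => rfl]

theorem contDiff_mderiv (α : Fin n → ℕ) {u : Dom n → V} (hu : ContDiff ℝ (⊤ : ℕ∞) u) :
    ContDiff ℝ (⊤ : ℕ∞) (mderiv α u) :=
  coe_mderivEnd α ⟨u, mem_smoothMaps.2 hu⟩ ▸ smoothMaps_contDiff _

theorem mderiv_translate (α : Fin n → ℕ) (u : Dom n → V) (a : Dom n) :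
    mderiv α (fun y => u (y - a)) = fun y => mderiv α u (y - a) :=
  mderiv_semiconj (Φ := fun w y => w (y - a)) (D := pderivDir)
    (fun j w => funext fun y => by simp only [pderivDir, fderiv_comp_sub]) α u

/-- Composition of smooth maps with a fixed continuous linear map. -/
def smoothComp (T : V →L[ℝ] W) : smoothMaps n V →ₗ[ℝ] smoothMaps n W where
  toFun u := ⟨fun x => T (u.1 x), T.contDiff.comp (smoothMaps_contDiff u)⟩
  map_add' u v := by ext x; simp
  map_smul' c u := by ext x; simp

theorem mderivEnd_smoothComp (T : V →L[ℝ] W) (α : Fin n → ℕ) (u : smoothMaps n V) :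
    mderivEnd α (smoothComp T u) = smoothComp T (mderivEnd α u) := by
  have hsemiconj : ∀ j, Function.Semiconj (fun u : smoothMaps n V => (smoothComp T u).1)
      (partialDeriv j) (pderivDir j) := fun j u => funext fun x =>
    DFunLike.congr_fun (T.hasFDerivAt.comp x
      (smoothMaps_differentiable u x).hasFDerivAt).fderiv.symm (Pi.single j 1)
  rw [Subtype.ext_iff, coe_mderivEnd, mderiv_semiconj hsemiconj, mderivEnd_apply]

theorem mderiv_clm_comp (T : V →L[ℝ] W) (α : Fin n → ℕ) {u : Dom n → V}
    (hu : ContDiff ℝ (⊤ : ℕ∞) u) :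
    mderiv α (fun x => T (u x)) = fun x => T (mderiv α u x) := by
  lift u to smoothMaps n V using mem_smoothMaps.2 hu
  have h := congrArg Subtype.val (mderivEnd_smoothComp T α u)
  rw [coe_mderivEnd] at h
  rw [← coe_mderivEnd]
  exact h

theorem mderivEnd_add (α β : Fin n → ℕ) :
    (mderivEnd (α + β) : Module.End ℝ (smoothMaps n V)) = mderivEnd α * mderivEnd β := by
  unfold mderivEnd
  induction List.finRange n with
  | nil => simp
  | cons j L ih =>
    have hcomm : Commute (partialDeriv j ^ β j)
        (L.map fun i => (partialDeriv i : Module.End ℝ (smoothMaps n V)) ^ α i).prod := by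
      refine Commute.list_prod_right _ _ fun y hy => ?_
      obtain ⟨i, -, rfl⟩ := List.mem_map.1 hy
      exact (partialDeriv_commute j i).pow_pow _ _
    simp only [List.map_cons, List.prod_cons, Pi.add_apply, pow_add] at ih ⊢
    rw [ih, mul_assoc, mul_assoc, ← mul_assoc _ _ (List.prod _), hcomm.eq, mul_assoc]

theorem mderivEnd_single (j : Fin n) :
    (mderivEnd (Pi.single j 1) : Module.End ℝ (smoothMaps n V)) = partialDeriv j := by
  rw [mderivEnd, List.prod_map_eq_pow_single j]
  · simp [List.count_eq_one_of_mem (List.nodup_finRange n) (List.mem_finRange j)]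
  · intro i hi _
    simp [hi]

theorem eventuallyEq_mderiv {u v : Dom n → V} {x : Dom n} (h : u =ᶠ[𝓝 x] v) (α : Fin n → ℕ) :
    mderiv α u =ᶠ[𝓝 x] mderiv α v := by
  have hpderiv : ∀ {f g : Dom n → V} (j : Fin n), f =ᶠ[𝓝 x] g →
      pderivDir j f =ᶠ[𝓝 x] pderivDir j g := fun j hfg =>
    hfg.fderiv.mono fun y hy => congr($hy (Pi.single j 1))
  have hiter : ∀ {f g : Dom n → V} (j : Fin n) (m : ℕ), f =ᶠ[𝓝 x] g →
      (pderivDir j)^[m] f =ᶠ[𝓝 x] (pderivDir j)^[m] g := fun j m hfg => by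
    induction m with
    | zero => exact hfg
    | succ m ih => simpa only [Function.iterate_succ_apply'] using hpderiv j ih
  unfold mderiv
  induction List.finRange n with
  | nil => exact h
  | cons j L ih => exact hiter j _ ih

theorem tsupport_mderiv_subset (α : Fin n → ℕ) (u : Dom n → V) :
    tsupport (mderiv α u) ⊆ tsupport u := by
  intro x
  contrapose!
  rw [notMem_tsupport_iff_eventuallyEq, notMem_tsupport_iff_eventuallyEq]
  intro hx
  have hzero : mderiv α (0 : Dom n → V) = 0 := by
    rw [← Submodule.coe_zero (p := smoothMaps n V), ← coe_mderivEnd, map_zero]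
  simpa only [hzero] using eventuallyEq_mderiv hx α

end PartialDerivatives

/-! ### Constant-coefficient operators and their symbols -/

section Operators

variable {n k l : ℕ} {U V W : Type*} [NormedAddCommGroup U] [NormedSpace ℝ U]
  [NormedAddCommGroup V] [NormedSpace ℝ V] [NormedAddCommGroup W] [NormedSpace ℝ W]

/-- A homogeneous constant-coefficient operator as a linear map between spaces of smooth maps. -/
def diffOp (A : (Fin n → ℕ) → (V →L[ℝ] W)) (k : ℕ) : smoothMaps n V →ₗ[ℝ] smoothMaps n W :=
  ∑ α ∈ degSet n k, smoothComp (A α) ∘ₗ mderivEnd α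

theorem coe_diffOp (A : (Fin n → ℕ) → (V →L[ℝ] W)) (k : ℕ) (u : smoothMaps n V) :
    (diffOp A k u : Dom n → W) = opApply A k u := by
  ext x
  simp only [diffOp, LinearMap.sum_apply, AddSubmonoidClass.coe_finsetSum, Finset.sum_apply,
    opApply, ← coe_mderivEnd]
  rfl

theorem opApply_const_smul (A : (Fin n → ℕ) → (V →L[ℝ] W)) (k : ℕ) {u : Dom n → V}
    (hu : ContDiff ℝ (⊤ : ℕ∞) u) (s : ℝ) (x : Dom n) :
    opApply A k (fun y => s • u y) x = s • opApply A k u x := by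
  lift u to smoothMaps n V using mem_smoothMaps.2 hu
  have h := congr(($((diffOp A k).map_smul s u) : Dom n → W) x)
  rwa [Submodule.coe_smul, Pi.smul_apply, coe_diffOp, coe_diffOp] at h

theorem opApply_translate (A : (Fin n → ℕ) → (V →L[ℝ] W)) (k : ℕ) (u : Dom n → V)
    (a x : Dom n) : opApply A k (fun y => u (y - a)) x = opApply A k u (x - a) := by
  simp only [opApply, mderiv_translate]

theorem eventuallyEq_opApply (A : (Fin n → ℕ) → (V →L[ℝ] W)) (k : ℕ) {u v : Dom n → V}
    {x : Dom n} (h : u =ᶠ[𝓝 x] v) : opApply A k u =ᶠ[𝓝 x] opApply A k v := by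
  have hall : ∀ᶠ y in 𝓝 x, ∀ α ∈ degSet n k, mderiv α u y = mderiv α v y :=
    (Finset.eventually_all _).2 fun α _ => eventuallyEq_mderiv h α
  exact hall.mono fun y hy => Finset.sum_congr rfl fun α hα => by rw [hy α hα]

theorem tsupport_opApply_subset (A : (Fin n → ℕ) → (V →L[ℝ] W)) (k : ℕ) (u : Dom n → V) :
    tsupport (opApply A k u) ⊆ tsupport u := by
  refine closure_minimal (fun x hx => ?_) (isClosed_tsupport u)
  by_contra hxu
  exact hx <| Finset.sum_eq_zero fun α _ => by
    rw [image_eq_zero_of_notMem_tsupport fun h => hxu (tsupport_mderiv_subset α u h), map_zero]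

theorem CcSmooth.opApply {Ω : Set (Dom n)} {u : Dom n → V} (hu : CcSmooth Ω u)
    (A : (Fin n → ℕ) → (V →L[ℝ] W)) (k : ℕ) : CcSmooth Ω (opApply A k u) := by
  have hsub := tsupport_opApply_subset A k u
  refine ⟨?_, hu.2.1.of_isClosed_subset (isClosed_tsupport _) hsub, hsub.trans hu.2.2⟩
  rw [← coe_diffOp A k ⟨u, mem_smoothMaps.2 hu.1⟩]
  exact smoothMaps_contDiff _

theorem sum_coeff_comp_eq_zero {A : (Fin n → ℕ) → (V →L[ℝ] W)} {B : (Fin n → ℕ) → (U →L[ℝ] V)}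
    (hsymbol : ∀ ξ u, opSymbol A k ξ (opSymbol B l ξ u) = 0) (γ : Fin n → ℕ) (u : U) :
    ∑ p ∈ degSet n k ×ˢ degSet n l with p.1 + p.2 = γ, A p.1 (B p.2 u) = 0 := by
  refine SeparatingDual.eq_zero_of_forall_dual_eq_zero (R := ℝ) fun f => ?_
  let P : MvPolynomial (Fin n) ℝ := ∑ p ∈ degSet n k ×ˢ degSet n l,
    MvPolynomial.monomial (Finsupp.equivFunOnFinite.symm (p.1 + p.2)) (f (A p.1 (B p.2 u)))
  have hP : P = 0 := by
    refine MvPolynomial.funext fun ξ => ?_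
    have hξ := congrArg f (hsymbol ξ u)
    simp only [opSymbol, sum_apply, smul_apply, map_sum, map_smul, map_zero, smul_eq_mul] at hξ
    rw [map_zero, ← hξ]
    simp only [P, map_sum, MvPolynomial.eval_monomial, Finset.sum_product_right, Finset.mul_sum]
    refine Finset.sum_congr rfl fun β _ => Finset.sum_congr rfl fun α _ => ?_
    rw [Finsupp.prod_fintype _ _ (by simp)]
    simp only [Finsupp.equivFunOnFinite_symm_apply_apply, Pi.add_apply, pow_add,
      Finset.prod_mul_distrib]
    ring
  have hcoeff := congrArg (MvPolynomial.coeff (Finsupp.equivFunOnFinite.symm γ)) hP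
  simp only [P, MvPolynomial.coeff_sum, MvPolynomial.coeff_monomial, MvPolynomial.coeff_zero,
    EmbeddingLike.apply_eq_iff_eq] at hcoeff
  rwa [map_sum, Finset.sum_filter]

theorem diffOp_diffOp_apply (A : (Fin n → ℕ) → (V →L[ℝ] W)) (B : (Fin n → ℕ) → (U →L[ℝ] V))
    (k l : ℕ) (u : smoothMaps n U) :
    diffOp A k (diffOp B l u) = ∑ p ∈ degSet n k ×ˢ degSet n l,
      smoothComp (A p.1) (smoothComp (B p.2) (mderivEnd (p.1 + p.2) u)) := by
  simp only [diffOp, LinearMap.sum_apply, map_sum, LinearMap.comp_apply, mderivEnd_smoothComp,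
    mderivEnd_add, Module.End.mul_apply, Finset.sum_product_right]

theorem diffOp_diffOp_eq_zero {A : (Fin n → ℕ) → (V →L[ℝ] W)} {B : (Fin n → ℕ) → (U →L[ℝ] V)}
    (hsymbol : ∀ ξ u, opSymbol A k ξ (opSymbol B l ξ u) = 0) (u : smoothMaps n U) :
    diffOp A k (diffOp B l u) = 0 := by
  classical
  rw [diffOp_diffOp_apply, ← Finset.sum_fiberwise_of_maps_to (g := fun p => p.1 + p.2)
    fun p hp => Finset.mem_image_of_mem _ hp]
  refine Finset.sum_eq_zero fun γ _ => Subtype.ext (funext fun x => ?_)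
  calc _ = ∑ p ∈ degSet n k ×ˢ degSet n l with p.1 + p.2 = γ,
          A p.1 (B p.2 ((mderivEnd γ u).1 x)) := by
        simp only [AddSubmonoidClass.coe_finsetSum, Finset.sum_apply]
        exact Finset.sum_congr rfl fun p hp => by rw [(Finset.mem_filter.1 hp).2]; rfl
    _ = 0 := sum_coeff_comp_eq_zero hsymbol γ _

theorem opApply_opApply_eq_zero {A : (Fin n → ℕ) → (V →L[ℝ] W)}
    {B : (Fin n → ℕ) → (U →L[ℝ] V)} (hsymbol : ∀ ξ u, opSymbol A k ξ (opSymbol B l ξ u) = 0)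
    {u : Dom n → U} (hu : ContDiff ℝ (⊤ : ℕ∞) u) (x : Dom n) :
    opApply A k (opApply B l u) x = 0 := by
  lift u to smoothMaps n U using mem_smoothMaps.2 hu
  have h := congr(($(diffOp_diffOp_eq_zero hsymbol u) : Dom n → W) x)
  rwa [coe_diffOp, coe_diffOp] at h

theorem ne_zero_of_mem_degSet (hk : 0 < k) {α : Fin n → ℕ} (hα : α ∈ degSet n k) : α ≠ 0 := by
  rintro rfl
  simpa [hk.ne] using (Finset.mem_filter.1 hα).2

theorem opSymbol_zero (A : (Fin n → ℕ) → (V →L[ℝ] W)) (hk : 0 < k) : opSymbol A k 0 = 0 := by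
  refine Finset.sum_eq_zero fun α hα => ?_
  obtain ⟨j, hj⟩ := Function.ne_iff.1 (ne_zero_of_mem_degSet hk hα)
  rw [Finset.prod_eq_zero (Finset.mem_univ j) (by simpa using hj), zero_smul]

theorem opSymbol_smul (A : (Fin n → ℕ) → (V →L[ℝ] W)) (k : ℕ) (c : ℝ) (ξ : Dom n) :
    opSymbol A k (c • ξ) = c ^ k • opSymbol A k ξ := by
  simp only [opSymbol, Finset.smul_sum, smul_smul]
  refine Finset.sum_congr rfl fun α hα => ?_
  simp only [Pi.smul_apply, smul_eq_mul, mul_pow, Finset.prod_mul_distrib,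
    Finset.prod_pow_eq_pow_sum, (Finset.mem_filter.1 hα).2]

theorem continuous_opSymbol (A : (Fin n → ℕ) → (V →L[ℝ] W)) (k : ℕ) :
    Continuous (opSymbol A k) := by
  unfold opSymbol
  fun_prop

theorem ExactPotential.opSymbol_opSymbol {A : (Fin n → ℕ) → (V →L[ℝ] W)}
    {B : (Fin n → ℕ) → (U →L[ℝ] V)} (h : ExactPotential A k B l) (hl : 0 < l) (ξ : Dom n) (u : U) :
    opSymbol A k ξ (opSymbol B l ξ u) = 0 := by
  obtain rfl | hξ := eq_or_ne ξ 0
  · simp [opSymbol_zero B hl]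
  · have hmem : opSymbol B l ξ u ∈ LinearMap.ker (opSymbol A k ξ : V →ₗ[ℝ] W) :=
      h ξ hξ ▸ LinearMap.mem_range_self _ u
    exact hmem

theorem ExactPotential.exists_of_mem_waveCone {A : (Fin n → ℕ) → (V →L[ℝ] W)}
    {B : (Fin n → ℕ) → (U →L[ℝ] V)} (h : ExactPotential A k B l) {v : V}
    (hv : v ∈ waveCone A k) : ∃ ξ u, opSymbol B l ξ u = v := by
  obtain ⟨ξ, hξ, hker⟩ := hv
  have hmem : v ∈ LinearMap.range (opSymbol B l ξ : U →ₗ[ℝ] V) := h ξ hξ ▸ hker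
  exact ⟨ξ, hmem⟩

end Operators

section MeanZero

variable {n k : ℕ} {V W : Type*} [NormedAddCommGroup V] [NormedSpace ℝ V]
  [NormedAddCommGroup W] [NormedSpace ℝ W]

theorem integral_pderivDir_eq_zero {u : Dom n → V} (hu : ContDiff ℝ (⊤ : ℕ∞) u)
    (hsupp : HasCompactSupport u) (j : Fin n) : ∫ x, pderivDir j u x = 0 := by
  have hint : Integrable fun x => fderiv ℝ u x (Pi.single j 1) :=
    (contDiff_pderivDir hu j).continuous.integrable_of_hasCompactSupport
      (hsupp.fderiv_apply (𝕜 := ℝ) _)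
  have hparts := integral_smul_fderiv_eq_neg_fderiv_smul_of_integrable (𝕜 := ℝ)
    (μ := (volume : Measure (Dom n))) (f := fun _ => (1 : ℝ)) (g := u) (v := Pi.single j 1)
    (by simp) (by simpa only [one_smul] using hint)
    (by simpa only [one_smul] using hu.continuous.integrable_of_hasCompactSupport hsupp)
    (fun x _ => differentiableAt_const _) (fun x _ => hu.differentiable (by simp) x)
  simpa [pderivDir] using hparts

theorem integral_mderiv_eq_zero {u : Dom n → V} (hu : ContDiff ℝ (⊤ : ℕ∞) u)
    (hsupp : HasCompactSupport u) {α : Fin n → ℕ} (hα : α ≠ 0) : ∫ x, mderiv α u x = 0 := by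
  obtain ⟨j, hj⟩ := Function.ne_iff.1 hα
  obtain ⟨β, rfl⟩ : ∃ β : Fin n → ℕ, α = Pi.single j 1 + β := by
    refine exists_add_of_le (show Pi.single j 1 ≤ α from fun i => ?_)
    obtain rfl | hi := eq_or_ne i j
    · simpa [Nat.one_le_iff_ne_zero] using hj
    · simp [hi]
  have hfactor : mderiv (Pi.single j 1 + β) u = pderivDir j (mderiv β u) := by
    lift u to smoothMaps n V using mem_smoothMaps.2 hu
    rw [← coe_mderivEnd, ← coe_mderivEnd, mderivEnd_add, mderivEnd_single]
    rfl
  rw [hfactor]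
  exact integral_pderivDir_eq_zero (contDiff_mderiv β hu)
    (hsupp.of_isClosed_subset (isClosed_tsupport _) (tsupport_mderiv_subset β u)) j

theorem integral_opApply_eq_zero (A : (Fin n → ℕ) → (V →L[ℝ] W)) (hk : 0 < k) {u : Dom n → V}
    (hu : ContDiff ℝ (⊤ : ℕ∞) u) (hsupp : HasCompactSupport u) : ∫ x, opApply A k u x = 0 := by
  have hsmooth : ∀ α, ContDiff ℝ (⊤ : ℕ∞) fun x => A α (u x) := fun α => (A α).contDiff.comp hu
  have hsupp' : ∀ α, HasCompactSupport fun x => A α (u x) := fun α =>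
    hsupp.comp_left (map_zero (A α))
  have hint : ∀ α, Integrable fun x => A α (mderiv α u x) := fun α => by
    rw [← mderiv_clm_comp (A α) α hu]
    exact (contDiff_mderiv α (hsmooth α)).continuous.integrable_of_hasCompactSupport
      ((hsupp' α).of_isClosed_subset (isClosed_tsupport _) (tsupport_mderiv_subset α _))
  simp only [opApply]
  rw [integral_finsetSum _ fun α _ => hint α]
  refine Finset.sum_eq_zero fun α hα => ?_
  rw [← mderiv_clm_comp (A α) α hu]
  exact integral_mderiv_eq_zero (hsmooth α) (hsupp' α) (ne_zero_of_mem_degSet hk hα)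

end MeanZero

/-! ### Periodization and Jensen's inequality -/

section Cube

variable {n : ℕ}

theorem isOpen_unitCube (n : ℕ) : IsOpen (unitCube n) :=
  isOpen_set_pi Set.finite_univ fun _ _ => isOpen_Ioo

theorem measurableSet_unitCube (n : ℕ) : MeasurableSet (unitCube n) :=
  (isOpen_unitCube n).measurableSet

theorem volume_unitCube (n : ℕ) : volume (unitCube n) = 1 := by
  simp only [unitCube, Real.volume_pi_Ioo, Finset.prod_const]
  norm_num

instance isProbabilityMeasure_restrict_unitCube (n : ℕ) :
    IsProbabilityMeasure ((volume : Measure (Dom n)).restrict (unitCube n)) :=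
  ⟨by rw [Measure.restrict_apply_univ, volume_unitCube]⟩

theorem round_eq_of_sub_mem_unitCube {x : Dom n} {m : Fin n → ℤ}
    (h : (x - fun i => (m i : ℝ)) ∈ unitCube n) (i : Fin n) : round (x i) = m i := by
  have hi : x i - m i ∈ Set.Ioo (-(1 / 2) : ℝ) (1 / 2) := h i (Set.mem_univ i)
  rw [round_eq, Int.floor_eq_iff]
  constructor <;> linarith [hi.1, hi.2]

end Cube

section Periodization

variable {n : ℕ} {V : Type*}

/-- The `ℤⁿ`-periodic extension of the restriction of `g` to the unit cube; rounding selects the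
cell of a point. -/
def periodize (g : Dom n → V) (x : Dom n) : V := g (x - fun i => (round (x i) : ℝ))

theorem zPeriodic_periodize (g : Dom n → V) : ZPeriodic (periodize g) := by
  intro x m
  unfold periodize
  congr 1
  ext i
  simp [round_add_intCast]

theorem periodize_eq_of_sub_mem_unitCube (g : Dom n → V) {x : Dom n} {m : Fin n → ℤ}
    (h : (x - fun i => (m i : ℝ)) ∈ unitCube n) :
    periodize g x = g (x - fun i => (m i : ℝ)) := by
  simp only [periodize, round_eq_of_sub_mem_unitCube h]

theorem periodize_eq_of_mem_unitCube (g : Dom n → V) {x : Dom n} (hx : x ∈ unitCube n) :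
    periodize g x = g x := by
  have hzero : (x - fun i => (((0 : Fin n → ℤ) i : ℤ) : ℝ)) = x := by ext i; simp
  rw [← hzero] at hx
  rw [periodize_eq_of_sub_mem_unitCube g hx, hzero]

variable [NormedAddCommGroup V] [NormedSpace ℝ V]

theorem CcSmooth.exists_periodize_eventuallyEq_translate {g : Dom n → V}
    (hg : CcSmooth (unitCube n) g) (x₀ : Dom n) :
    ∃ a : Dom n, periodize g =ᶠ[𝓝 x₀] fun y => g (y - a) := by
  obtain ⟨δ, hδ, hthick⟩ :=
    hg.2.1.isCompact.exists_thickening_subset_open (isOpen_unitCube n) hg.2.2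
  refine ⟨fun i => (round (x₀ i) : ℝ), ?_⟩
  filter_upwards [Metric.ball_mem_nhds x₀ hδ] with y hy
  by_cases hsupp : (y - fun i => (round (y i) : ℝ)) ∈ tsupport g
  · have hx₀ : (x₀ - fun i => (round (y i) : ℝ)) ∈ unitCube n :=
      hthick (Metric.mem_thickening_iff.2 ⟨_, hsupp, by rwa [dist_sub_right, dist_comm]⟩)
    simp only [periodize, round_eq_of_sub_mem_unitCube hx₀]
  · by_cases hsupp' : (y - fun i => (round (x₀ i) : ℝ)) ∈ tsupport g
    · exact periodize_eq_of_sub_mem_unitCube g (hg.2.2 hsupp')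
    · rw [periodize, image_eq_zero_of_notMem_tsupport hsupp,
        image_eq_zero_of_notMem_tsupport hsupp']

theorem CcSmooth.contDiff_periodize {g : Dom n → V} (hg : CcSmooth (unitCube n) g) :
    ContDiff ℝ (⊤ : ℕ∞) (periodize g) :=
  contDiff_iff_contDiffAt.2 fun x => by
    obtain ⟨a, ha⟩ := hg.exists_periodize_eventuallyEq_translate x
    exact (hg.1.comp (contDiff_id.sub contDiff_const)).contDiffAt.congr_of_eventuallyEq ha

theorem CcSmooth.setIntegral_periodize {g : Dom n → V} (hg : CcSmooth (unitCube n) g) :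
    ∫ x in unitCube n, periodize g x = ∫ x, g x := by
  rw [setIntegral_congr_fun (measurableSet_unitCube n) fun x hx =>
    periodize_eq_of_mem_unitCube g hx]
  exact setIntegral_eq_integral_of_forall_compl_eq_zero fun x hx =>
    image_eq_zero_of_notMem_tsupport fun h => hx (hg.2.2 h)

end Periodization

section Jensen

variable {n k l : ℕ} {U V W : Type*} [NormedAddCommGroup U] [NormedSpace ℝ U]
  [NormedAddCommGroup W] [NormedSpace ℝ W]

theorem AQuasiconvex.le_integral_opApply [NormedAddCommGroup V] [NormedSpace ℝ V]
    {A : (Fin n → ℕ) → (V →L[ℝ] W)} {B : (Fin n → ℕ) → (U →L[ℝ] V)} {F : V → ℝ}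
    (hF : AQuasiconvex A k F) (hexact : ExactPotential A k B l) (hl : 0 < l) {u : Dom n → U}
    (hu : CcSmooth (unitCube n) u) (z : V) :
    F z ≤ ∫ x in unitCube n, F (z + opApply B l u x) := by
  have hBu := hu.opApply B l
  have hmean : ∫ x in unitCube n, periodize (opApply B l u) x = 0 :=
    hBu.setIntegral_periodize.trans (integral_opApply_eq_zero B hl hu.1 hu.2.1)
  have hannihilated : ∀ x, opApply A k (periodize (opApply B l u)) x = 0 := fun x => by
    obtain ⟨a, ha⟩ := hBu.exists_periodize_eventuallyEq_translate x
    rw [(eventuallyEq_opApply A k ha).eq_of_nhds, opApply_translate,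
      opApply_opApply_eq_zero (hexact.opSymbol_opSymbol hl) hu.1]
  refine (hF.2 z _ hBu.contDiff_periodize (zPeriodic_periodize _) hmean hannihilated).trans_eq ?_
  exact setIntegral_congr_fun (measurableSet_unitCube n) fun x hx => by
    rw [periodize_eq_of_mem_unitCube _ hx]

theorem AQuasiconvex.le_of_memY [NormedAddCommGroup V] [InnerProductSpace ℝ V]
    [FiniteDimensional ℝ V] [MeasurableSpace V] [BorelSpace V]
    {A : (Fin n → ℕ) → (V →L[ℝ] W)} {B : (Fin n → ℕ) → (U →L[ℝ] V)} {F : V → ℝ}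
    (hF : AQuasiconvex A k F) (hFH : MemH F) (hexact : ExactPotential A k B l) (hl : 0 < l)
    {z : V} {nu0 : Measure V} {nuInf : Measure (Metric.sphere (0 : V) 1)}
    (hY : memY B l z nu0 nuInf) : F z ≤ (∫ v, F v ∂nu0) + ∫ w, rrec F (w : V) ∂nuInf := by
  obtain ⟨u, hu, -, hlim⟩ := hY
  exact ge_of_tendsto' (hlim F hFH) fun j => hF.le_integral_opApply hexact hl (hu j) z

end Jensen

/-! ### Convexity from mean value inequalities -/

section MeanValueConvexity

variable {Ω : Type*} [MeasurableSpace Ω] {μ : Measure Ω} {c : Ω → ℝ}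

theorem integrable_continuous_comp_of_abs_le_one [IsFiniteMeasure μ] (hc : AEMeasurable c μ)
    (hc_le : ∀ x, |c x| ≤ 1) {φ : ℝ → ℝ} (hφ : Continuous φ) :
    Integrable (fun x => φ (c x)) μ := by
  obtain ⟨M, hM⟩ := isCompact_Icc.exists_bound_of_continuousOn (s := Set.Icc (-1) 1) hφ.continuousOn
  exact .of_bound (hφ.measurable.comp_aemeasurable hc).aestronglyMeasurable M
    (.of_forall fun x => hM _ (abs_le.1 (hc_le x)))

-- At the leftmost interior maximum the mean value inequality forces `c ≥ 0`, hence `c = 0`.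
theorem nonpos_of_le_integral [IsProbabilityMeasure μ] (hc : AEMeasurable c μ)
    (hc_le : ∀ x, |c x| ≤ 1) (hc_mean : ∫ x, c x ∂μ = 0) (hc_ne : ¬ c =ᵐ[μ] 0) {ψ : ℝ → ℝ}
    (hψ : Continuous ψ) (hmean : ∀ a ε, ψ a ≤ ∫ x, ψ (a + ε * c x) ∂μ) {p q : ℝ}
    (hp : ψ p ≤ 0) (hq : ψ q ≤ 0) {s : ℝ} (hs : s ∈ Set.Icc p q) : ψ s ≤ 0 := by
  by_contra! hpos
  obtain ⟨b, hb, hbmax⟩ := isCompact_Icc.exists_isMaxOn ⟨s, hs⟩ hψ.continuousOn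
  have hψb : 0 < ψ b := hpos.trans_le (hbmax hs)
  obtain ⟨a, ⟨haI, haM : ψ a = ψ b⟩, hleast⟩ :=
    (isCompact_Icc.inter_right (isClosed_singleton.preimage hψ)).exists_isLeast ⟨b, hb, rfl⟩
  have hpa : p < a := haI.1.lt_of_ne (by rintro rfl; linarith)
  have haq : a < q := haI.2.lt_of_ne (by rintro rfl; linarith)
  obtain ⟨ε, hε, hεp, hεq⟩ : ∃ ε > 0, ε ≤ a - p ∧ ε ≤ q - a :=
    ⟨min (a - p) (q - a), lt_min (by linarith) (by linarith), min_le_left _ _, min_le_right _ _⟩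
  have hmem : ∀ x, a + ε * c x ∈ Set.Icc p q := fun x => by
    have := abs_le.1 (hc_le x)
    constructor <;> nlinarith
  have hint : Integrable (fun x => ψ (a + ε * c x)) μ :=
    integrable_continuous_comp_of_abs_le_one hc hc_le (φ := fun r => ψ (a + ε * r)) (by fun_prop)
  have hmax : (fun x => ψ (a + ε * c x)) =ᵐ[μ] fun _ => ψ b := by
    have hle : (fun x => ψ (a + ε * c x)) ≤ᵐ[μ] fun _ => ψ b :=
      .of_forall fun x => hbmax (hmem x)
    refine (integral_eq_iff_of_ae_le hint (integrable_const _) hle).1 ?_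
    refine (integral_mono_ae hint (integrable_const _) hle).antisymm ?_
    simpa [haM] using hmean a ε
  have hc_nonneg : 0 ≤ᵐ[μ] c := hmax.mono fun x hx => by
    have : a ≤ a + ε * c x := hleast ⟨hmem x, hx⟩
    exact nonneg_of_mul_nonneg_right (by linarith) hε
  exact hc_ne <| (integral_eq_zero_iff_of_nonneg_ae hc_nonneg
    (integrable_continuous_comp_of_abs_le_one hc hc_le continuous_id)).1 hc_mean

theorem convexOn_of_le_integral [IsProbabilityMeasure μ] (hc : AEMeasurable c μ)
    (hc_le : ∀ x, |c x| ≤ 1) (hc_mean : ∫ x, c x ∂μ = 0) (hc_ne : ¬ c =ᵐ[μ] 0) {ψ : ℝ → ℝ}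
    (hψ : Continuous ψ) (hmean : ∀ a ε, ψ a ≤ ∫ x, ψ (a + ε * c x) ∂μ) :
    ConvexOn ℝ Set.univ ψ := by
  refine LinearOrder.convexOn_of_lt convex_univ fun p _ q _ hpq a b ha hb hab => ?_
  let m := (ψ q - ψ p) / (q - p)
  have hm : m * (q - p) = ψ q - ψ p := div_mul_cancel₀ _ (sub_pos.2 hpq).ne'
  have hb' : a * p + b * q - p = b * (q - p) := by linear_combination p * hab
  have hmem : a * p + b * q ∈ Set.Icc p q := by
    constructor <;> nlinarith
  have hint : ∀ {φ : ℝ → ℝ}, Continuous φ → Integrable (fun x => φ (c x)) μ :=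
    integrable_continuous_comp_of_abs_le_one hc hc_le
  have hchord : ψ (a * p + b * q) - (ψ p + m * (a * p + b * q - p)) ≤ 0 := by
    refine nonpos_of_le_integral hc hc_le hc_mean hc_ne
      (ψ := fun s => ψ s - (ψ p + m * (s - p))) (by fun_prop) (fun s ε => ?_) (p := p) (q := q)
      (by simp) (by simp [hm]) hmem
    have haffine : ∫ x, (ψ p + m * (s + ε * c x - p)) ∂μ = ψ p + m * (s - p) := by
      calc ∫ x, (ψ p + m * (s + ε * c x - p)) ∂μ
          = ∫ x, (ψ p + m * (s - p) + m * ε * c x) ∂μ := by congr with x; ring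
        _ = ψ p + m * (s - p) := by
          rw [integral_add (integrable_const _) (hint (φ := fun r => m * ε * r) (by fun_prop)),
            integral_const_mul, hc_mean]
          simp
    rw [integral_sub (hint (φ := fun r => ψ (s + ε * r)) (by fun_prop))
      (hint (φ := fun r => ψ p + m * (s + ε * r - p)) (by fun_prop)), haffine]
    exact sub_le_sub_right (hmean s ε) _
  rw [hb', mul_left_comm, hm] at hchord
  simp only [smul_eq_mul]
  linear_combination hchord - ψ p * hab

end MeanValueConvexity

section PlaneWaves

variable {n : ℕ} {V W : Type*} [NormedAddCommGroup V] [NormedSpace ℝ V]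
  [NormedAddCommGroup W] [NormedSpace ℝ W]

theorem pderivDir_planeWave (j : Fin n) (ξ : Dom n) (v : V) (a : ℝ) {g : ℝ → ℝ}
    (hg : Differentiable ℝ g) :
    pderivDir j (fun x : Dom n => (a * g (ξ ⬝ᵥ x)) • v) =
      fun x => (ξ j * a * deriv g (ξ ⬝ᵥ x)) • v := by
  ext x
  have hphase : HasFDerivAt (fun x : Dom n => ξ ⬝ᵥ x)
      (∑ i, ξ i • (ContinuousLinearMap.proj i : Dom n →L[ℝ] ℝ)) x :=
    HasFDerivAt.fun_sum fun i _ =>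
      (ContinuousLinearMap.proj i : Dom n →L[ℝ] ℝ).hasFDerivAt.const_mul (ξ i)
  have hwave := ((((hg _).hasDerivAt.comp_hasFDerivAt x hphase).const_mul a).smul_const v).fderiv
  simp only [Function.comp_def] at hwave
  simp only [pderivDir, hwave]
  simp [Pi.single_apply]
  ring_nf

theorem mderiv_planeWave (α : Fin n → ℕ) (ξ : Dom n) (v : V) {g : ℝ → ℝ}
    (hg : ContDiff ℝ (⊤ : ℕ∞) g) :
    mderiv α (fun x : Dom n => g (ξ ⬝ᵥ x) • v) =
      fun x => ((∏ i, ξ i ^ α i) * iteratedDeriv (∑ i, α i) g (ξ ⬝ᵥ x)) • v := by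
  rw [mderiv, Fin.prod_univ_def, Fin.sum_univ_def]
  induction List.finRange n with
  | nil => simp
  | cons j L ih =>
    simp only [List.foldr_cons, ih, List.map_cons, List.prod_cons, List.sum_cons]
    induction α j with
    | zero => simp
    | succ m ihm =>
      have hdiff := hg.differentiable_iteratedDeriv (m + (L.map α).sum)
        (WithTop.coe_lt_coe.2 (ENat.natCast_lt_top _))
      rw [Function.iterate_succ_apply', ihm, pderivDir_planeWave j ξ v _ hdiff, add_right_comm,
        pow_succ', mul_assoc, iteratedDeriv_succ]

theorem opApply_planeWave (A : (Fin n → ℕ) → (V →L[ℝ] W)) (k : ℕ) (ξ : Dom n) (v : V)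
    {g : ℝ → ℝ} (hg : ContDiff ℝ (⊤ : ℕ∞) g) (x : Dom n) :
    opApply A k (fun x => g (ξ ⬝ᵥ x) • v) x =
      iteratedDeriv k g (ξ ⬝ᵥ x) • opSymbol A k ξ v := by
  simp only [opApply, opSymbol, sum_apply, smul_apply, Finset.smul_sum, mderiv_planeWave _ _ _ hg]
  refine Finset.sum_congr rfl fun α hα => ?_
  rw [(Finset.mem_filter.1 hα).2, map_smul, mul_comm, mul_smul]

/-- The scalar plane wave `cos (2π ξ·x)` with frequency `ξ ∈ ℤⁿ`. -/
def cosWave (ξ : Fin n → ℤ) (x : Dom n) : ℝ :=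
  Real.cos (2 * Real.pi * ((fun i => (ξ i : ℝ)) ⬝ᵥ x))

theorem contDiff_cosWave (ξ : Fin n → ℤ) : ContDiff ℝ (⊤ : ℕ∞) (cosWave ξ) := by
  unfold cosWave dotProduct
  fun_prop

theorem abs_cosWave_le_one (ξ : Fin n → ℤ) (x : Dom n) : |cosWave ξ x| ≤ 1 :=
  Real.abs_cos_le_one _

theorem zPeriodic_cosWave (ξ : Fin n → ℤ) : ZPeriodic (cosWave ξ) := by
  intro x m
  have hphase : 2 * Real.pi * ((fun i => (ξ i : ℝ)) ⬝ᵥ (x + fun i => (m i : ℝ))) =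
      2 * Real.pi * ((fun i => (ξ i : ℝ)) ⬝ᵥ x) + (ξ ⬝ᵥ m : ℤ) * (2 * Real.pi) := by
    rw [dotProduct_add, mul_add, mul_comm _ (2 * Real.pi)]
    simp [dotProduct]
  rw [cosWave, hphase, Real.cos_add_int_mul_two_pi, cosWave]

theorem not_cosWave_ae_eq_zero (ξ : Fin n → ℤ) :
    ¬ cosWave ξ =ᵐ[volume.restrict (unitCube n)] 0 := by
  intro h
  have h0 := Measure.eqOn_open_of_ae_eq h (isOpen_unitCube n)
    (contDiff_cosWave ξ).continuous.continuousOn continuousOn_const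
    (show (0 : Dom n) ∈ unitCube n from fun i _ => by simp)
  simp [cosWave] at h0

theorem integral_exp_two_pi_int_mul_eq_zero {m : ℤ} (hm : m ≠ 0) :
    ∫ y in Set.Ioo (-(1 / 2) : ℝ) (1 / 2), Complex.exp (2 * Real.pi * Complex.I * m * y) = 0 := by
  have hne : (2 * Real.pi * Complex.I * m : ℂ) ≠ 0 := by simp [hm, Real.pi_ne_zero]
  have hends : Complex.exp (2 * Real.pi * Complex.I * m * ((1 / 2 : ℝ) : ℂ)) =
      Complex.exp (2 * Real.pi * Complex.I * m * ((-(1 / 2) : ℝ) : ℂ)) :=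
    Complex.exp_eq_exp_iff_exists_int.2 ⟨m, by push_cast; ring⟩
  rw [← integral_Ioc_eq_integral_Ioo, ← intervalIntegral.integral_of_le (by norm_num),
    integral_exp_mul_complex hne, hends, sub_self, zero_div]

theorem cosWave_eq_re_prod (ξ : Fin n → ℤ) (x : Dom n) :
    cosWave ξ x = (∏ i, Complex.exp (2 * Real.pi * Complex.I * ξ i * x i)).re := by
  have hphase : ∑ i, 2 * Real.pi * Complex.I * ξ i * (x i : ℂ) =
      ((2 * Real.pi * ((fun i => (ξ i : ℝ)) ⬝ᵥ x) : ℝ) : ℂ) * Complex.I := by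
    push_cast [dotProduct]
    rw [Finset.mul_sum, Finset.sum_mul]
    exact Finset.sum_congr rfl fun i _ => by ring
  rw [← Complex.exp_sum, hphase, Complex.exp_ofReal_mul_I_re, cosWave]

theorem integral_cosWave_eq_zero {ξ : Fin n → ℤ} (hξ : ξ ≠ 0) :
    ∫ x in unitCube n, cosWave ξ x = 0 := by
  obtain ⟨j, hj⟩ := Function.ne_iff.1 hξ
  have hprod : ∫ x in unitCube n, ∏ i, Complex.exp (2 * Real.pi * Complex.I * ξ i * x i) = 0 := by
    rw [unitCube, volume_pi, Measure.restrict_pi_pi,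
      integral_fintype_prod_eq_prod fun i (y : ℝ) =>
        Complex.exp (2 * Real.pi * Complex.I * ξ i * y)]
    exact Finset.prod_eq_zero (Finset.mem_univ j) (integral_exp_two_pi_int_mul_eq_zero hj)
  have hint : IntegrableOn (fun x : Dom n => ∏ i, Complex.exp (2 * Real.pi * Complex.I * ξ i * x i))
      (unitCube n) := by
    refine .of_bound (by rw [volume_unitCube]; exact ENNReal.one_lt_top)
      (Continuous.aestronglyMeasurable (by fun_prop)) 1 (.of_forall fun x => ?_)
    simp [norm_prod, Complex.norm_exp]
  simp only [cosWave_eq_re_prod]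
  exact (integral_re hint).trans (by rw [hprod]; rfl)

end PlaneWaves

/-! ### Convexity along wave cone directions -/

section WaveConeConvexity

variable {n k l : ℕ} {U V W : Type*} [NormedAddCommGroup U] [NormedSpace ℝ U]
  [NormedAddCommGroup V] [NormedSpace ℝ V] [NormedAddCommGroup W] [NormedSpace ℝ W]
  {A : (Fin n → ℕ) → (V →L[ℝ] W)} {B : (Fin n → ℕ) → (U →L[ℝ] V)} {F : V → ℝ}

theorem opApply_cosWave_smul {ξ : Fin n → ℤ} {v : V}
    (hv : opSymbol A k (fun i => (ξ i : ℝ)) v = 0) (ε : ℝ) (x : Dom n) :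
    opApply A k (fun x => (ε * cosWave ξ x) • v) x = 0 := by
  have hwave := opApply_planeWave A k (fun i => (ξ i : ℝ)) v
    (g := fun s => ε * Real.cos (2 * Real.pi * s)) (by fun_prop) x
  rwa [hv, smul_zero] at hwave

theorem AQuasiconvex.convexOn_line_of_int [CompleteSpace V] (hF : AQuasiconvex A k F)
    {ξ : Fin n → ℤ} (hξ : ξ ≠ 0) {v : V} (hv : opSymbol A k (fun i => (ξ i : ℝ)) v = 0) (z : V) :
    ConvexOn ℝ Set.univ fun s : ℝ => F (z + s • v) := by
  have hF_cont := hF.1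
  have hwave := contDiff_cosWave ξ
  refine convexOn_of_le_integral hwave.continuous.measurable.aemeasurable (abs_cosWave_le_one ξ)
    (integral_cosWave_eq_zero hξ) (not_cosWave_ae_eq_zero ξ) (by fun_prop) fun a ε => ?_
  have hmean : ∫ x in unitCube n, (ε * cosWave ξ x) • v = 0 := by
    rw [integral_smul_const, integral_const_mul, integral_cosWave_eq_zero hξ, mul_zero, zero_smul]
  have hjensen := hF.2 (z + a • v) (fun x => (ε * cosWave ξ x) • v) (by fun_prop)
    (fun x m => congrArg (fun c => (ε * c) • v) (zPeriodic_cosWave ξ x m))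
    hmean (opApply_cosWave_smul hv ε)
  simpa only [add_smul, add_assoc] using hjensen

theorem exists_int_eq_smul_rat (q : Fin n → ℚ) :
    ∃ (N : ℤ) (m : Fin n → ℤ), N ≠ 0 ∧
      (fun i => (m i : ℝ)) = (N : ℝ) • fun i => (q i : ℝ) := by
  obtain ⟨N, hN⟩ := IsLocalization.exist_integer_multiples_of_finite (nonZeroDivisors ℤ) q
  choose m hm using hN
  refine ⟨N, m, nonZeroDivisors.coe_ne_zero N, funext fun i => ?_⟩
  have hmi : (m i : ℚ) = (N : ℤ) * q i := by simpa using hm i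
  simpa using congrArg (Rat.cast : ℚ → ℝ) hmi

theorem AQuasiconvex.convexOn_line_of_rat [CompleteSpace V] (hF : AQuasiconvex A k F)
    {q : Fin n → ℚ} (hq : (fun i => (q i : ℝ)) ≠ 0) {v : V}
    (hv : opSymbol A k (fun i => (q i : ℝ)) v = 0) (z : V) :
    ConvexOn ℝ Set.univ fun s : ℝ => F (z + s • v) := by
  obtain ⟨N, m, hN, hm⟩ := exists_int_eq_smul_rat q
  refine hF.convexOn_line_of_int (ξ := m) ?_ ?_ z
  · rintro rfl
    refine (smul_ne_zero (Int.cast_ne_zero.2 hN) hq) (hm.symm.trans ?_)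
    ext; simp
  · rw [hm, opSymbol_smul, smul_apply, hv, smul_zero]

-- The potential makes the wave cone direction `ℬ(ξ)u` depend continuously on `ξ`, so that
-- rational frequencies suffice; kernels of `𝒜(ξ)` alone could jump.
theorem AQuasiconvex.convexOn_line [CompleteSpace V] (hF : AQuasiconvex A k F)
    (hexact : ExactPotential A k B l) (hl : 0 < l) {v : V} (hv : v ∈ waveCone A k) (z : V) :
    ConvexOn ℝ Set.univ fun s : ℝ => F (z + s • v) := by
  obtain ⟨ξ, u, rfl⟩ := hexact.exists_of_mem_waveCone hv
  have hF_cont := hF.1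
  have hB_cont := continuous_opSymbol B l
  have hdense : DenseRange fun (q : Fin n → ℚ) (i : Fin n) => (q i : ℝ) :=
    DenseRange.piMap fun _ => Rat.denseRange_cast
  refine hdense.induction_on
    (p := fun ξ => ConvexOn ℝ Set.univ fun s : ℝ => F (z + s • opSymbol B l ξ u)) ξ ?_ fun q => ?_
  · simp only [ConvexOn, convex_univ, true_and, Set.ofPred_forall]
    exact isClosed_iInter fun s => isClosed_iInter fun _ => isClosed_iInter fun r =>
      isClosed_iInter fun _ => isClosed_iInter fun a => isClosed_iInter fun b =>
      isClosed_iInter fun _ => isClosed_iInter fun _ => isClosed_iInter fun _ =>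
      isClosed_le (by fun_prop) (by fun_prop)
  · by_cases hq : (fun i => (q i : ℝ)) = 0
    · simpa [hq, opSymbol_zero B hl] using convexOn_const (F z) convex_univ
    · exact hF.convexOn_line_of_rat hq (hexact.opSymbol_opSymbol hl _ u) z

end WaveConeConvexity

/-! ### Lipschitz continuity -/

section Lipschitz

variable {E : Type*} [NormedAddCommGroup E] [NormedSpace ℝ E]

-- Convexity bounds `f y - f x` by the slope of `f` on the ray from `x` through `y`, and far out
-- on the ray that slope is at most `b ‖y - x‖`.
theorem lipschitzWith_of_convexOn_of_le_add_mul_norm {f : E → ℝ} (hf : ConvexOn ℝ Set.univ f)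
    {a : ℝ} {b : NNReal} (hgrowth : ∀ x, f x ≤ a + b * ‖x‖) : LipschitzWith b f := by
  refine LipschitzWith.of_le_add_mul b fun y x => ?_
  have hray : ∀ T : ℝ, 1 ≤ T → f y ≤ f x + b * ‖y - x‖ + (a + b * ‖x‖ - f x) / T := by
    intro T hT
    have hT0 : 0 < T := by linarith
    have hconv := hf.2 (Set.mem_univ x) (Set.mem_univ (x + T • (y - x)))
      (sub_nonneg.2 (inv_le_one_of_one_le₀ hT)) (inv_nonneg.2 hT0.le) (by ring)
    rw [show (1 - T⁻¹) • x + T⁻¹ • (x + T • (y - x)) = y by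
      rw [smul_add, inv_smul_smul₀ hT0.ne', sub_smul, one_smul]; abel] at hconv
    have hfar : f (x + T • (y - x)) ≤ a + b * (‖x‖ + T * ‖y - x‖) := by
      refine (hgrowth _).trans ?_
      gcongr
      simpa [norm_smul, abs_of_pos hT0] using norm_add_le x (T • (y - x))
    calc f y ≤ (1 - T⁻¹) * f x + T⁻¹ * f (x + T • (y - x)) := hconv
      _ ≤ (1 - T⁻¹) * f x + T⁻¹ * (a + b * (‖x‖ + T * ‖y - x‖)) := by gcongr
      _ = f x + b * ‖y - x‖ + (a + b * ‖x‖ - f x) / T := by field_simp; ring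
  rw [dist_eq_norm]
  have hlim : Tendsto (fun T : ℝ => f x + b * ‖y - x‖ + (a + b * ‖x‖ - f x) / T) atTop
      (𝓝 (f x + b * ‖y - x‖ + 0)) := (tendsto_id.const_div_atTop _).const_add _
  rw [add_zero] at hlim
  exact ge_of_tendsto hlim ((eventually_ge_atTop 1).mono hray)

theorem exists_lipschitzWith_of_span_eq_top [FiniteDimensional ℝ E] {X : Type*}
    [PseudoMetricSpace X] {S : Set E} (hS : Submodule.span ℝ S = ⊤) {f : E → X}
    (hf : ∀ v ∈ S, ∃ K : NNReal, ∀ z, LipschitzWith K fun s : ℝ => f (z + s • v)) :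
    ∃ K : NNReal, LipschitzWith K f := by
  let b := Module.Basis.ofSpan hS.ge
  have := FiniteDimensional.fintypeBasisIndex b
  choose K hK using fun i => hf (b i) (Module.Basis.ofSpan_subset hS.ge ⟨i, rfl⟩)
  have htelescope : ∀ (z : E) (c : _ → ℝ) (T : Finset _),
      dist (f (z + ∑ i ∈ T, c i • b i)) (f z) ≤ ∑ i ∈ T, K i * |c i| := by
    classical
    intro z c T
    induction T using Finset.induction_on with
    | empty => simp
    | insert i T hi ih =>
      rw [Finset.sum_insert hi, Finset.sum_insert hi, add_comm (c i • b i), ← add_assoc]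
      refine (dist_triangle _ (f (z + ∑ i ∈ T, c i • b i)) _).trans (add_le_add ?_ ih)
      simpa using (hK i (z + ∑ i ∈ T, c i • b i)).dist_le_mul (c i) 0
  let coord i : E →L[ℝ] ℝ := LinearMap.toContinuousLinearMap (b.coord i)
  refine ⟨∑ i, K i * ‖coord i‖₊, LipschitzWith.of_dist_le_mul fun x y => ?_⟩
  calc dist (f x) (f y) = dist (f (y + ∑ i, coord i (x - y) • b i)) (f y) := by
        rw [show ∑ i, coord i (x - y) • b i = x - y from b.sum_repr _, add_sub_cancel]
    _ ≤ ∑ i, K i * |coord i (x - y)| := htelescope y _ _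
    _ ≤ ∑ i, K i * (‖coord i‖ * ‖x - y‖) := by gcongr; exact (coord _).le_opNorm _
    _ = _ := by simp [dist_eq_norm, Finset.sum_mul, mul_assoc]

theorem AQuasiconvex.exists_lipschitzWith [FiniteDimensional ℝ E] {n k l : ℕ} {U W : Type*}
    [NormedAddCommGroup U] [NormedSpace ℝ U] [NormedAddCommGroup W] [NormedSpace ℝ W]
    {A : (Fin n → ℕ) → (E →L[ℝ] W)} {B : (Fin n → ℕ) → (U →L[ℝ] E)} {F : E → ℝ}
    (hF : AQuasiconvex A k F) (hgrowth : LinearGrowth F) (hspan : SpanningCone A k)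
    (hexact : ExactPotential A k B l) (hl : 0 < l) : ∃ K : NNReal, LipschitzWith K F := by
  have := FiniteDimensional.complete ℝ E
  obtain ⟨c, hc⟩ := hgrowth
  have hc0 : 0 ≤ c := by simpa using (abs_nonneg _).trans (hc 0)
  refine exists_lipschitzWith_of_span_eq_top hspan fun v hv => ⟨⟨c * ‖v‖, by positivity⟩, fun z =>
    lipschitzWith_of_convexOn_of_le_add_mul_norm (hF.convexOn_line hexact hl hv z)
      (a := c * (1 + ‖z‖)) fun s => ?_⟩
  calc F (z + s • v) ≤ c * (1 + (‖z‖ + ‖s • v‖)) :=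
        (le_abs_self _).trans ((hc _).trans (by gcongr; exact norm_add_le _ _))
    _ = c * (1 + ‖z‖) + c * ‖v‖ * ‖s‖ := by rw [norm_smul]; ring

end Lipschitz

/-! ### The Lipschitz constant as the supremum of the gradients -/

section Gradients

theorem abs_sub_le_mul_of_ae_abs_deriv_le {f : ℝ → ℝ} {K : NNReal} (hf : LipschitzWith K f)
    {M : ℝ} (hM : ∀ᵐ t, |deriv f t| ≤ M) (a b : ℝ) : |f b - f a| ≤ M * |b - a| := by
  rw [← Real.norm_eq_abs, ← hf.lipschitzOnWith.absolutelyContinuousOnInterval.integral_deriv_eq_sub]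
  exact intervalIntegral.norm_integral_le_of_norm_le_const_ae (hM.mono fun t ht _ => ht)

-- By Fubini almost every line in a given direction meets the good set in almost every point, so
-- the estimate holds for almost every base point, hence for every one by continuity.
theorem lipschitzWith_of_ae_norm_fderiv_le {E : Type*} [NormedAddCommGroup E] [NormedSpace ℝ E]
    [FiniteDimensional ℝ E] [MeasurableSpace E] [BorelSpace E] {μ : Measure E}
    [μ.IsAddHaarMeasure] {f : E → ℝ} {K M : NNReal} (hf : LipschitzWith K f)
    (hM : ∀ᵐ x ∂μ, ‖fderiv ℝ f x‖ ≤ M) : LipschitzWith M f := by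
  refine LipschitzWith.of_dist_le_mul fun x y => ?_
  let v := x - y
  let G := {p | DifferentiableAt ℝ f p ∧ ‖fderiv ℝ f p‖ ≤ M}
  have hG_meas : MeasurableSet G := (measurableSet_of_differentiableAt ℝ f).inter
    ((measurable_fderiv ℝ f).norm measurableSet_Iic)
  have hG_ae : ∀ᵐ p ∂μ, p ∈ G := hf.ae_differentiableAt.and hM
  have hline : ∀ᵐ p ∂μ, ∀ᵐ t : ℝ, p + t • v ∈ G :=
    (ae_ae_add_linearMap_mem_iff (LinearMap.toSpanSingleton ℝ E v) volume μ hG_meas).2 hG_ae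
  have hae : ∀ᵐ p ∂μ, |f (p + v) - f p| ≤ M * ‖v‖ := by
    filter_upwards [hline] with p hp
    have hlip : LipschitzWith (K * ‖v‖₊) fun t : ℝ => f (p + t • v) := by
      refine hf.comp (LipschitzWith.of_dist_le_mul fun s t => ?_)
      simp [dist_eq_norm, ← sub_smul, norm_smul, mul_comm]
    have hderiv : ∀ᵐ t : ℝ, |deriv (fun t => f (p + t • v)) t| ≤ M * ‖v‖ := by
      filter_upwards [hp] with t ⟨hdiff, hnorm⟩
      have hcurve : HasDerivAt (fun t : ℝ => p + t • v) v t := by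
        simpa using ((hasDerivAt_id t).smul_const v).const_add p
      have hcomp : HasDerivAt (fun t : ℝ => f (p + t • v)) (fderiv ℝ f (p + t • v) v) t :=
        hdiff.hasFDerivAt.comp_hasDerivAt t hcurve
      rw [hcomp.deriv]
      exact (fderiv ℝ f _).le_of_opNorm_le hnorm v
    simpa using abs_sub_le_mul_of_ae_abs_deriv_le hlip hderiv 0 1
  have hclosed : IsClosed {p | |f (p + v) - f p| ≤ M * ‖v‖} := by
    have := hf.continuous
    exact isClosed_le (by fun_prop) (by fun_prop)
  have hy : |f (y + v) - f y| ≤ M * ‖v‖ := hclosed.closure_subset (Measure.dense_of_ae hae y)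
  simpa [v, Real.dist_eq, dist_eq_norm] using hy

variable {V : Type*} [NormedAddCommGroup V] [InnerProductSpace ℝ V] [FiniteDimensional ℝ V]
  {F : V → ℝ} {K : NNReal}

theorem mem_derivSet_of_differentiableAt {x : V} (hF : DifferentiableAt ℝ F x) :
    (InnerProductSpace.toDual ℝ V).symm (fderiv ℝ F x) ∈ derivSet F :=
  ⟨x, by simpa using hF.hasFDerivAt⟩

theorem norm_le_of_mem_derivSet (hF : LipschitzWith K F) {ζ : V} (hζ : ζ ∈ derivSet F) :
    ‖ζ‖ ≤ K := by
  obtain ⟨x, hx⟩ := hζ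
  simpa using hx.le_of_lipschitz hF

theorem derivSet_nonempty (hF : LipschitzWith K F) : (derivSet F).Nonempty := by
  borelize V
  obtain ⟨x, hx⟩ := (hF.ae_differentiableAt (μ := Measure.addHaar)).exists
  exact ⟨_, mem_derivSet_of_differentiableAt hx⟩

theorem lipschitzWith_of_norm_derivSet_le (hF : LipschitzWith K F) {M : NNReal}
    (hM : ∀ ζ ∈ derivSet F, ‖ζ‖ ≤ M) : LipschitzWith M F := by
  borelize V
  refine lipschitzWith_of_ae_norm_fderiv_le (μ := Measure.addHaar) hF ?_
  filter_upwards [hF.ae_differentiableAt] with x hx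
  simpa using hM _ (mem_derivSet_of_differentiableAt hx)

theorem isLeast_sSup_norm_derivSet (hF : LipschitzWith K F) :
    IsLeast {L : ℝ | 0 ≤ L ∧ ∀ x y, |F x - F y| ≤ L * ‖x - y‖}
      (sSup ((fun ζ => ‖ζ‖) '' derivSet F)) := by
  have hbdd : BddAbove ((fun ζ => ‖ζ‖) '' derivSet F) :=
    ⟨K, Set.forall_mem_image.2 fun ζ hζ => norm_le_of_mem_derivSet hF hζ⟩
  have hnonneg : 0 ≤ sSup ((fun ζ => ‖ζ‖) '' derivSet F) :=
    Real.sSup_nonneg (Set.forall_mem_image.2 fun ζ _ => norm_nonneg ζ)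
  refine ⟨⟨hnonneg, ?_⟩, fun L ⟨hL, hFL⟩ => ?_⟩
  · lift sSup ((fun ζ => ‖ζ‖) '' derivSet F) to NNReal using hnonneg with M hM
    refine lipschitzWith_iff_norm_sub_le.1 (lipschitzWith_of_norm_derivSet_le hF fun ζ hζ => ?_)
    exact hM ▸ le_csSup hbdd ⟨ζ, hζ, rfl⟩
  · lift L to NNReal using hL
    exact csSup_le ((derivSet_nonempty hF).image _) <| Set.forall_mem_image.2 fun ζ hζ =>
      norm_le_of_mem_derivSet (lipschitzWith_iff_norm_sub_le.2 hFL) hζ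

end Gradients

/-! ### Blow-up at a point of differentiability -/

section Recession

variable {V : Type*} [NormedAddCommGroup V] [NormedSpace ℝ V] {F G g : V → ℝ}

theorem HasRec.rrec_eq (h : HasRec F g) (w : V) : rrec F w = g w :=
  (tendstoLocallyUniformlyOn_univ.2 h |>.tendsto_at (Set.mem_univ w)).limsup_eq

theorem hasRec_clm (f : V →L[ℝ] ℝ) : HasRec f f := by
  intro u hu x
  refine ⟨Set.univ, univ_mem, ?_⟩
  filter_upwards [eventually_gt_atTop (0 : ℝ)] with t ht y _
  rw [map_smul, smul_eq_mul, mul_div_cancel_left₀ _ ht.ne']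
  exact refl_mem_uniformity hu

theorem memH_clm (f : V →L[ℝ] ℝ) : MemH f := by
  refine ⟨f.continuous, ⟨‖f‖, fun z => (f.le_opNorm z).trans ?_⟩, f, hasRec_clm f⟩
  gcongr
  linarith

theorem HasRec.of_abs_sub_le (hF : HasRec F g) {C : ℝ} (hG : ∀ w, |G w - F w| ≤ C) :
    HasRec G g := by
  rw [HasRec, Metric.tendstoLocallyUniformly_iff] at *
  intro ε hε x
  obtain ⟨S, hS, hFS⟩ := hF (ε / 2) (half_pos hε) x
  have herror : ∀ᶠ t : ℝ in atTop, C / t < ε / 2 :=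
    (tendsto_id.const_div_atTop C).eventually_lt_const (half_pos hε)
  refine ⟨S, hS, ?_⟩
  filter_upwards [hFS, herror, eventually_gt_atTop 0] with t hFt herr ht y hy
  have hGF : dist (F (t • y) / t) (G (t • y) / t) ≤ C / t := by
    rw [dist_comm, Real.dist_eq, ← sub_div, abs_div, abs_of_pos ht]
    gcongr
    exact hG _
  linarith [dist_triangle (g y) (F (t • y) / t) (G (t • y) / t), hFt y hy]

theorem HasRec.rescale (hF : HasRec F g) {s : ℝ} (hs : 0 < s) :
    HasRec (fun w => s⁻¹ * F (s • w)) g := by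
  intro u hu x
  obtain ⟨S, hS, hFS⟩ := hF u hu x
  refine ⟨S, hS, ?_⟩
  filter_upwards [(tendsto_id.const_mul_atTop hs).eventually hFS] with t hFt y hy
  have hscale : s⁻¹ * F (s • t • y) / t = F ((s * t) • y) / (s * t) := by
    rw [smul_smul, inv_mul_eq_div, div_div]
  simpa only [hscale, id_eq] using hFt y hy

/-- The difference quotient of `F` at `z₀` with step `s`, as a function of the direction `w`: the
blow-up of `F` at `z₀`. -/
def diffQuot (F : V → ℝ) (z₀ : V) (s : ℝ) (w : V) : ℝ :=
  s⁻¹ * (F (z₀ + s • w) - F z₀)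

theorem continuous_diffQuot (hF : Continuous F) (z₀ : V) (s : ℝ) :
    Continuous (diffQuot F z₀ s) := by
  unfold diffQuot
  fun_prop

theorem abs_diffQuot_le {K : NNReal} (hF : LipschitzWith K F) (z₀ : V) {s : ℝ} (hs : 0 < s)
    (w : V) : |diffQuot F z₀ s w| ≤ K * ‖w‖ := by
  rw [diffQuot, abs_mul, abs_of_pos (inv_pos.2 hs), inv_mul_le_iff₀ hs]
  have hlip := hF.dist_le_mul (z₀ + s • w) z₀
  rw [Real.dist_eq, dist_self_add_left, norm_smul, Real.norm_of_nonneg hs.le] at hlip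
  exact hlip.trans_eq (by ring)

protected theorem HasRec.diffQuot (hg : HasRec F g) {K : NNReal} (hF : LipschitzWith K F)
    (z₀ : V) {s : ℝ} (hs : 0 < s) : HasRec (diffQuot F z₀ s) g := by
  refine (hg.rescale hs).of_abs_sub_le (C := s⁻¹ * (K * ‖z₀‖ + |F z₀|)) fun w => ?_
  have hlip := hF.dist_le_mul (z₀ + s • w) (s • w)
  rw [Real.dist_eq, dist_add_self_left] at hlip
  rw [diffQuot, ← mul_sub, abs_mul, abs_of_pos (inv_pos.2 hs), sub_right_comm]
  gcongr
  exact (abs_sub _ _).trans (add_le_add_left hlip _)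

protected theorem MemH.diffQuot (hFH : MemH F) {K : NNReal} (hF : LipschitzWith K F)
    (z₀ : V) {s : ℝ} (hs : 0 < s) : MemH (diffQuot F z₀ s) := by
  obtain ⟨hcont, -, g, hg⟩ := hFH
  refine ⟨continuous_diffQuot hcont z₀ s, ⟨K, fun w => (abs_diffQuot_le hF z₀ hs w).trans ?_⟩, g,
    hg.diffQuot hF z₀ hs⟩
  gcongr
  linarith

theorem tendsto_diffQuot {f : V →L[ℝ] ℝ} {z₀ : V} (hf : HasFDerivAt F f z₀) (w : V) :
    Tendsto (fun s : ℝ => diffQuot F z₀ s w) (𝓝[>] 0) (𝓝 (f w)) :=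
  (hf.hasLineDerivAt w).tendsto_slope_zero_right

theorem tendsto_integral_diffQuot [MeasurableSpace V] [OpensMeasurableSpace V]
    [SecondCountableTopology V] {ν : Measure V} (hν : Integrable (fun v : V => ‖v‖) ν)
    {K : NNReal} (hF : LipschitzWith K F) {f : V →L[ℝ] ℝ} {z₀ : V} (hf : HasFDerivAt F f z₀) :
    Tendsto (fun s : ℝ => ∫ v, diffQuot F z₀ s v ∂ν) (𝓝[>] 0) (𝓝 (∫ v, f v ∂ν)) := by
  refine tendsto_integral_filter_of_dominated_convergence (fun v => K * ‖v‖)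
    (.of_forall fun s => (continuous_diffQuot hF.continuous z₀ s).aestronglyMeasurable) ?_
    (hν.const_mul _) (.of_forall (tendsto_diffQuot hf))
  filter_upwards [self_mem_nhdsWithin] with s hs
  exact .of_forall (abs_diffQuot_le hF z₀ hs)

end Recession

section BlowUp

variable {n k l : ℕ} {U V W : Type*} [NormedAddCommGroup U] [NormedSpace ℝ U]
  [NormedAddCommGroup W] [NormedSpace ℝ W]

theorem integrableOn_unitCube_of_continuous {E : Type*} [NormedAddCommGroup E] {f : Dom n → E}
    (hf : Continuous f) : IntegrableOn f (unitCube n) :=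
  (hf.continuousOn.integrableOn_compact (isCompact_univ_pi fun _ => isCompact_Icc)).mono_set
    (Set.pi_mono fun _ _ => Set.Ioo_subset_Icc_self)

theorem aQuasiconvex_clm [NormedAddCommGroup V] [NormedSpace ℝ V] [CompleteSpace V]
    (A : (Fin n → ℕ) → (V →L[ℝ] W)) (k : ℕ) (f : V →L[ℝ] ℝ) : AQuasiconvex A k f := by
  refine ⟨f.continuous, fun z v hv _ hmean _ => ?_⟩
  have hint := integrableOn_unitCube_of_continuous hv.continuous
  have hbary : ∫ x in unitCube n, z + v x = z := by
    simp [integral_add (integrable_const z) hint, hmean]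
  exact (congrArg f hbary).ge.trans_eq (f.integral_comp_comm ((integrable_const z).add hint)).symm

protected theorem AQuasiconvex.diffQuot [NormedAddCommGroup V] [NormedSpace ℝ V]
    {A : (Fin n → ℕ) → (V →L[ℝ] W)} {F : V → ℝ} (hF : AQuasiconvex A k F) (z₀ : V) {s : ℝ}
    (hs : 0 < s) : AQuasiconvex A k (diffQuot F z₀ s) := by
  refine ⟨continuous_diffQuot hF.1 z₀ s, fun z v hv hper hmean hAv => ?_⟩
  have hjensen : F (z₀ + s • z) ≤ ∫ x in unitCube n, F (z₀ + s • z + s • v x) := by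
    refine hF.2 _ _ (hv.const_smul s) (fun x m => congrArg (s • ·) (hper x m)) ?_ fun x => ?_
    · rw [integral_smul, hmean, smul_zero]
    · rw [opApply_const_smul A k hv, hAv, smul_zero]
  have hcont : Continuous fun x => F (z₀ + s • z + s • v x) :=
    hF.1.comp (continuous_const.add (hv.continuous.const_smul s))
  simp only [diffQuot, smul_add, ← add_assoc]
  rw [integral_const_mul,
    integral_sub (integrableOn_unitCube_of_continuous hcont) (integrable_const _)]
  simpa [hs] using hjensen

variable [NormedAddCommGroup V] [InnerProductSpace ℝ V] [FiniteDimensional ℝ V]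
  [MeasurableSpace V] [BorelSpace V] {A : (Fin n → ℕ) → (V →L[ℝ] W)}
  {B : (Fin n → ℕ) → (U →L[ℝ] V)} {z : V} {nu0 : Measure V}
  {nuInf : Measure (Metric.sphere (0 : V) 1)} {F : V → ℝ} {K : NNReal}

theorem clm_le_of_memY (hexact : ExactPotential A k B l) (hl : 0 < l)
    (hY : memY B l z nu0 nuInf) (f : V →L[ℝ] ℝ) :
    f z ≤ (∫ v, f v ∂nu0) + ∫ w, f (w : V) ∂nuInf := by
  have := FiniteDimensional.complete ℝ V
  simpa only [(hasRec_clm f).rrec_eq] using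
    (aQuasiconvex_clm A k f).le_of_memY (memH_clm f) hexact hl hY

theorem AQuasiconvex.fderiv_le_of_memY (hF : AQuasiconvex A k F) (hFH : MemH F)
    (hLip : LipschitzWith K F) (hexact : ExactPotential A k B l) (hl : 0 < l)
    (hmom : Integrable (fun v : V => ‖v‖) nu0) (hY : memY B l z nu0 nuInf) {f : V →L[ℝ] ℝ}
    {z₀ : V} (hf : HasFDerivAt F f z₀) :
    f z ≤ (∫ v, f v ∂nu0) + ∫ w, rrec F (w : V) ∂nuInf := by
  obtain ⟨g, hg⟩ := hFH.2.2
  refine le_of_tendsto_of_tendsto (tendsto_diffQuot hf z)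
    ((tendsto_integral_diffQuot hmom hLip hf).add_const _) ?_
  filter_upwards [self_mem_nhdsWithin] with s hs
  simpa only [(hg.diffQuot hLip z₀ hs).rrec_eq, hg.rrec_eq] using
    (hF.diffQuot z₀ hs).le_of_memY (hFH.diffQuot hLip z₀ hs) hexact hl hY

theorem AQuasiconvex.integral_fderiv_le_integral_rrec (hF : AQuasiconvex A k F) (hFH : MemH F)
    (hLip : LipschitzWith K F) (hexact : ExactPotential A k B l) (hl : 0 < l)
    (hmom : Integrable (fun v : V => ‖v‖) nu0) (hY : memY B l z nu0 nuInf) {f : V →L[ℝ] ℝ}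
    {z₀ : V} (hf : HasFDerivAt F f z₀) :
    ∫ w, f (w : V) ∂nuInf ≤ ∫ w, rrec F (w : V) ∂nuInf := by
  have hupper := hF.fderiv_le_of_memY hFH hLip hexact hl hmom hY hf
  have hlower := clm_le_of_memY hexact hl hY (-f)
  simp only [neg_apply, integral_neg] at hlower
  linarith

theorem AQuasiconvex.inner_le_integral_rrec [IsFiniteMeasure nuInf] (hF : AQuasiconvex A k F)
    (hFH : MemH F) (hLip : LipschitzWith K F) (hexact : ExactPotential A k B l) (hl : 0 < l)
    {t : ℝ} (ht : 0 < t) (hmom : Integrable (fun v : V => ‖v‖) nu0)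
    (hY : memY B l z nu0 (ENNReal.ofReal t • nuInf)) {ζ : V} (hζ : ζ ∈ derivSet F) :
    inner ℝ ζ (∫ w, (w : V) ∂nuInf) ≤ ∫ w, rrec F (w : V) ∂nuInf := by
  have := FiniteDimensional.complete ℝ V
  obtain ⟨z₀, hz₀⟩ := hζ
  have hscaled := hF.integral_fderiv_le_integral_rrec hFH hLip hexact hl hmom hY hz₀
  rw [integral_smul_measure, integral_smul_measure, ENNReal.toReal_ofReal ht.le] at hscaled
  have hint : Integrable (fun w : Metric.sphere (0 : V) 1 => (w : V)) nuInf :=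
    .of_bound continuous_subtype_val.aestronglyMeasurable 1 (.of_forall fun w => by simp)
  rw [← integral_inner hint]
  exact le_of_smul_le_smul_left hscaled ht

end BlowUp

theorem stmt17_general {n k l : ℕ} (hl : 0 < l)
    {V W U : Type*} [NormedAddCommGroup V] [InnerProductSpace ℝ V] [FiniteDimensional ℝ V]
    [MeasurableSpace V] [BorelSpace V] [NormedAddCommGroup W] [NormedSpace ℝ W]
    [NormedAddCommGroup U] [NormedSpace ℝ U]
    {A : (Fin n → ℕ) → (V →L[ℝ] W)} {B : (Fin n → ℕ) → (U →L[ℝ] V)}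
    (hspan : SpanningCone A k) (hexact : ExactPotential A k B l)
    {z : V} {t : ℝ} (ht : 0 < t)
    {nu0 : Measure V} {nuInf : Measure (Metric.sphere (0 : V) 1)}
    (hmom : Integrable (fun v : V => ‖v‖) nu0) [IsFiniteMeasure nuInf]
    (hY : memY B l z nu0 (ENNReal.ofReal t • nuInf))
    {F : V → ℝ} (hF : MemH F) (hFqc : AQuasiconvex A k F) :
    suppFn (derivSet F) (∫ w, (w : V) ∂nuInf) ≤ (∫ w, rrec F (w : V) ∂nuInf) ∧
    (∃ M : ℝ, ∀ ζ ∈ derivSet F, ‖ζ‖ ≤ M) ∧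
    sSup ((fun ζ => ‖ζ‖) '' derivSet F) =
      sInf {K : ℝ | 0 ≤ K ∧ ∀ x y, |F x - F y| ≤ K * ‖x - y‖} := by
  obtain ⟨K, hLip⟩ := hFqc.exists_lipschitzWith hF.2.1 hspan hexact hl
  refine ⟨csSup_le ((derivSet_nonempty hLip).image _) ?_,
    ⟨K, fun ζ hζ => norm_le_of_mem_derivSet hLip hζ⟩,
    (isLeast_sSup_norm_derivSet hLip).csInf_eq.symm⟩
  exact Set.forall_mem_image.2 fun ζ hζ =>
    hFqc.inner_le_integral_rrec hF hLip hexact hl ht hmom hY hζ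

/-! ## Statement 17: a necessary condition at points of diffuse concentration -/

theorem stmt17 {n k l : ℕ} (hn : 0 < n) (hk : 0 < k) (hl : 0 < l)
    {V W U : Type*} [NormedAddCommGroup V] [InnerProductSpace ℝ V] [FiniteDimensional ℝ V]
    [MeasurableSpace V] [BorelSpace V]
    [NormedAddCommGroup W] [InnerProductSpace ℝ W] [FiniteDimensional ℝ W]
    [NormedAddCommGroup U] [InnerProductSpace ℝ U] [FiniteDimensional ℝ U]
    (A : (Fin n → ℕ) → (V →L[ℝ] W)) (B : (Fin n → ℕ) → (U →L[ℝ] V))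
    (hspan : SpanningCone A k) (hexact : ExactPotential A k B l)
    (z : V) (t : ℝ) (ht : 0 < t)
    (nu0 : Measure V) (nuInf : Measure (Metric.sphere (0:V) 1))
    (hprob : IsProbabilityMeasure nu0) (hmom : Integrable (fun v : V => ‖v‖) nu0)
    (hprobInf : IsProbabilityMeasure nuInf)
    (hY : memY B l z nu0 (ENNReal.ofReal t • nuInf))
    (F : V → ℝ) (hF : MemH F) (hFqc : AQuasiconvex A k F) :
    suppFn (derivSet F) (∫ w, (w : V) ∂nuInf) ≤ (∫ w, rrec F (w : V) ∂nuInf) ∧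
    (∃ M : ℝ, ∀ ζ ∈ derivSet F, ‖ζ‖ ≤ M) ∧
    sSup ((fun ζ => ‖ζ‖) '' derivSet F) =
      sInf {K : ℝ | 0 ≤ K ∧ ∀ x y, |F x - F y| ≤ K * ‖x - y‖} :=
  stmt17_general hl hspan hexact ht hmom hY hF hFqc

end
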